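/- Let ℓ ≥ 1 and m ≥ 1. Then the recurrence rate RR_ℓ(ω, m) = lim_{n→∞} [ℓ·C(ω, n, m + ℓ − 1) − (ℓ − 1)·C(ω, n, m + ℓ)] exists and equals: 5/9 if m = 1 and ℓ = 1; (3·2^{k+1} − 4q + 4ℓ − 4)/(3·2^k)² if m + ℓ ≥ 3 and q < 2^{k−1}; and (5·2^k − 2q + 2ℓ − 2)/(3·2^k)² if m + ℓ ≥ 3 and q ≥ 2^{k−1}; where, for m + ℓ ≥ 3, k ≥ 1 and 0 ≤ q < 2^k are the unique integers with m + ℓ − 1 = 2^k + q. -/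

import Mathlib

/-!
The proof uses the self-similarity `ω_{2i-1} = 0`, `ω_{2i} = 1 - ω_i` of the period-doubling
sequence. Split the pairs `(i, j)` counted by the correlation sum according to parity.
Two even positions agree along `M` letters iff their halves agree along `⌊M/2⌋` letters, and two
odd positions iff their halves agree along `⌈M/2⌉` letters (`agree_even_even`, `agree_odd_odd`).
Positions of different parity never agree when `3 ≤ M`, because `11` does not occur in `ω`
(`not_agree_even_odd`). Hence, if `c(M)` denotes the limit of the correlation sums,
`c(M) = (c(⌊M/2⌋) + c(⌈M/2⌉)) / 4` for `3 ≤ M` (`tendsto_corrSum_step`).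

The initial values `c(1) = 5/9` and `c(2) = 1/3` come from the density `1/3` of the letter `1`
(`tendsto_ones`). Induction on `k` then gives `c(2^k + q)` in closed form, affine in `q` on each of
`[0, 2^(k-1)]` and `[2^(k-1), 2^k]` with both endpoints included (`tendsto_corrSum`).
As `M` and `M + 1` always lie in a common piece, the recurrence rate
`l * c(M) - (l - 1) * c(M + 1)` follows at once.
-/

open Filter Topology

/-- The period-doubling sequence (1-based): `pd i = k_i mod 2` where `k_i` is the
largest `k` such that `2^k` divides `i`. -/
def pd (i : ℕ) : ℕ := padicValNat 2 i % 2

/-- The `m`-word `w_i^(m) = ω_i ω_{i+1} ⋯ ω_{i+m-1}` of the period-doubling sequence. -/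
def wordAt (i m : ℕ) : List ℕ := (List.range m).map (fun h => pd (i + h))

/-- An `m`-word is allowed if it occurs in the period-doubling sequence. -/
def Allowed (m : ℕ) (v : List ℕ) : Prop := ∃ i, 1 ≤ i ∧ wordAt i m = v

/-- The complexity function of the period-doubling sequence. -/
noncomputable def pdComplexity (m : ℕ) : ℕ := Set.ncard {v | Allowed m v}

/-- `HasFreq m v c`: the frequency of the `m`-word `v` in the period-doubling
sequence exists and equals `c`. -/
def HasFreq (m : ℕ) (v : List ℕ) (c : ℝ) : Prop :=
  Tendsto (fun n : ℕ => (((Finset.Icc 1 n).filter (fun i => wordAt i m = v)).card : ℝ) / n)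
    atTop (𝓝 c)

open Classical in
/-- The correlation sum `C(ω, n, m)` of the period-doubling sequence, for a distance
threshold `ε` with `2^{-m} ≤ ε < 2^{-m+1}`. -/
noncomputable def corrSum (n m : ℕ) : ℝ :=
  (((Finset.range n ×ˢ Finset.range n).filter
      (fun p : ℕ × ℕ => ∀ h ∈ Finset.Icc 1 m, pd (p.1 + h) = pd (p.2 + h))).card : ℝ) / (n : ℝ) ^ 2

/-- The period-doubling substitution `ζ(0) = 01`, `ζ(1) = 00`, extended to a morphism
on finite words. -/
def substWord (w : List ℕ) : List ℕ := (w.map (fun a => if a = 0 then [0, 1] else [0, 0])).flatten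

/-- The period-doubling substitution acting on one-sided infinite sequences
(0-based indexing). -/
def substSeq (x : ℕ → ℕ) : ℕ → ℕ := fun n =>
  if n % 2 = 0 then 0 else if x (n / 2) = 0 then 1 else 0

/-! ### Self-similarity of the sequence -/

lemma pd_odd (i : ℕ) : pd (2 * i + 1) = 0 := by
  unfold pd
  rw [padicValNat.eq_zero_of_not_dvd (by omega)]

lemma pd_two_mul (i : ℕ) (hi : i ≠ 0) : pd (2 * i) = 1 - pd i := by
  unfold pd
  rw [padicValNat.mul (by norm_num) hi, padicValNat.self (by norm_num)]
  omega

lemma pd_le_one (i : ℕ) : pd i ≤ 1 := by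
  unfold pd
  omega

/-- The words of length `M` that follow the positions `i` and `j` coincide. -/
def Agree (M i j : ℕ) : Prop := ∀ h ∈ Finset.Icc 1 M, pd (i + h) = pd (j + h)

lemma pd_two_mul_eq_iff (a b : ℕ) (ha : a ≠ 0) (hb : b ≠ 0) :
    pd (2 * a) = pd (2 * b) ↔ pd a = pd b := by
  rw [pd_two_mul a ha, pd_two_mul b hb]
  have := pd_le_one a
  have := pd_le_one b
  omega

lemma agree_even_even (M i j : ℕ) : Agree M (2 * i) (2 * j) ↔ Agree (M / 2) i j := by
  unfold Agree
  constructor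
  · intro H h hh
    rw [Finset.mem_Icc] at hh
    have := H (2 * h) (by rw [Finset.mem_Icc]; omega)
    rw [← mul_add, ← mul_add] at this
    exact (pd_two_mul_eq_iff _ _ (by omega) (by omega)).1 this
  · intro H h hh
    rw [Finset.mem_Icc] at hh
    obtain ⟨t, rfl | rfl⟩ := h.even_or_odd'
    · rw [← mul_add, ← mul_add]
      exact (pd_two_mul_eq_iff _ _ (by omega) (by omega)).2
        (H t (by rw [Finset.mem_Icc]; omega))
    · rw [← add_assoc, ← add_assoc, ← mul_add, ← mul_add, pd_odd, pd_odd]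

lemma agree_odd_odd (M i j : ℕ) :
    Agree M (2 * i + 1) (2 * j + 1) ↔ Agree ((M + 1) / 2) i j := by
  unfold Agree
  constructor
  · intro H h hh
    rw [Finset.mem_Icc] at hh
    have := H (2 * h - 1) (by rw [Finset.mem_Icc]; omega)
    rw [show 2 * i + 1 + (2 * h - 1) = 2 * (i + h) by omega,
      show 2 * j + 1 + (2 * h - 1) = 2 * (j + h) by omega] at this
    exact (pd_two_mul_eq_iff _ _ (by omega) (by omega)).1 this
  · intro H h hh
    rw [Finset.mem_Icc] at hh
    obtain ⟨t, rfl | rfl⟩ := h.even_or_odd'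
    · rw [show 2 * i + 1 + 2 * t = 2 * (i + t) + 1 by ring,
        show 2 * j + 1 + 2 * t = 2 * (j + t) + 1 by ring, pd_odd, pd_odd]
    · rw [show 2 * i + 1 + (2 * t + 1) = 2 * (i + (t + 1)) by ring,
        show 2 * j + 1 + (2 * t + 1) = 2 * (j + (t + 1)) by ring]
      exact (pd_two_mul_eq_iff _ _ (by omega) (by omega)).2
        (H (t + 1) (by rw [Finset.mem_Icc]; omega))

lemma agree_symm (M i j : ℕ) : Agree M i j ↔ Agree M j i :=
  ⟨fun H h hh => (H h hh).symm, fun H h hh => (H h hh).symm⟩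

lemma pd_eq_one_of_even_odd {M i j : ℕ} (hM : 1 ≤ M) (H : Agree M (2 * i) (2 * j + 1)) :
    pd (j + 1) = 1 := by
  have h1 := H 1 (by rw [Finset.mem_Icc]; omega)
  rw [pd_odd, show 2 * j + 1 + 1 = 2 * (j + 1) by ring, pd_two_mul _ (by omega)] at h1
  have := pd_le_one (j + 1)
  omega

lemma not_agree_even_odd (M i j : ℕ) (hM : 3 ≤ M) : ¬ Agree M (2 * i) (2 * j + 1) := by
  intro H
  have h1 := pd_eq_one_of_even_odd (by omega) H
  have h3 := H 3 (by rw [Finset.mem_Icc]; omega)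
  rw [show 2 * i + 3 = 2 * (i + 1) + 1 by ring, pd_odd,
    show 2 * j + 1 + 3 = 2 * (j + 2) by ring, pd_two_mul _ (by omega)] at h3
  -- One of the consecutive positions `j + 1`, `j + 2` is odd, hence carries the letter `0`.
  obtain ⟨t, rfl | rfl⟩ := j.even_or_odd'
  · rw [pd_odd] at h1
    omega
  · rw [show 2 * t + 1 + 2 = 2 * (t + 1) + 1 by ring, pd_odd] at h3
    omega

lemma agree_two_even_odd (i j : ℕ) :
    Agree 2 (2 * i) (2 * j + 1) ↔ pd (i + 1) = 1 ∧ pd (j + 1) = 1 := by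
  have hi := pd_two_mul (i + 1) (by omega)
  have hj := pd_two_mul (j + 1) (by omega)
  have hi1 := pd_odd i
  have hj1 := pd_odd (j + 1)
  have := pd_le_one (i + 1)
  constructor
  · intro H
    refine ⟨?_, pd_eq_one_of_even_odd (by omega) H⟩
    have h2 := H 2 (by rw [Finset.mem_Icc]; omega)
    rw [show 2 * i + 2 = 2 * (i + 1) by ring, show 2 * j + 1 + 2 = 2 * (j + 1) + 1 by ring] at h2
    omega
  · rintro ⟨h1, h2⟩ h hh
    rw [Finset.mem_Icc] at hh
    obtain rfl | rfl : h = 1 ∨ h = 2 := by omega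
    · rw [show 2 * j + 1 + 1 = 2 * (j + 1) by ring]
      omega
    · rw [show 2 * i + 2 = 2 * (i + 1) by ring, show 2 * j + 1 + 2 = 2 * (j + 1) + 1 by ring]
      omega

/-! ### Counting pairs by parity -/

lemma sum_range_parity (f : ℕ → ℝ) (n : ℕ) :
    ∑ i ∈ Finset.range n, f i = ∑ i ∈ Finset.range ((n + 1) / 2), f (2 * i)
      + ∑ i ∈ Finset.range (n / 2), f (2 * i + 1) := by
  induction n with
  | zero => simp
  | succ n ih =>
    rw [Finset.sum_range_succ, ih]
    obtain ⟨t, rfl | rfl⟩ := n.even_or_odd'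
    · rw [show (2 * t + 1 + 1) / 2 = t + 1 by omega, show (2 * t + 1) / 2 = t by omega,
        show 2 * t / 2 = t by omega, Finset.sum_range_succ]
      ring
    · rw [show (2 * t + 1 + 1 + 1) / 2 = t + 1 by omega, show (2 * t + 1 + 1) / 2 = t + 1 by omega,
        show (2 * t + 1) / 2 = t by omega, Finset.sum_range_succ (fun i => f (2 * i + 1))]
      ring

open Classical in
/-- The number of pairs in `[0, n)²` that agree along `M` letters, as a real number. -/
noncomputable def pairCount (n M : ℕ) : ℝ :=
  ∑ i ∈ Finset.range n, ∑ j ∈ Finset.range n, if Agree M i j then 1 else 0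

lemma corrSum_eq (n M : ℕ) : corrSum n M = pairCount n M / (n : ℝ) ^ 2 := by
  classical
  unfold corrSum pairCount Agree
  rw [← Finset.sum_product', Finset.card_filter]
  push_cast
  congr!

/-- The indicator of the letter `1` after position `i`. -/
noncomputable def oneInd (i : ℕ) : ℝ := if pd (i + 1) = 1 then 1 else 0

/-- The number of letters `1` among the first `n` letters, as a real number. -/
noncomputable def ones (n : ℕ) : ℝ := ∑ i ∈ Finset.range n, oneInd i

open Classical in
lemma pairCount_parity (n M : ℕ) :
    pairCount n M = pairCount ((n + 1) / 2) (M / 2) + pairCount (n / 2) ((M + 1) / 2)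
      + 2 * ∑ i ∈ Finset.range ((n + 1) / 2), ∑ j ∈ Finset.range (n / 2),
          if Agree M (2 * i) (2 * j + 1) then (1 : ℝ) else 0 := by
  have hsymm : ∑ i ∈ Finset.range (n / 2), ∑ j ∈ Finset.range ((n + 1) / 2),
      (if Agree M (2 * i + 1) (2 * j) then (1 : ℝ) else 0)
      = ∑ i ∈ Finset.range ((n + 1) / 2), ∑ j ∈ Finset.range (n / 2),
          if Agree M (2 * i) (2 * j + 1) then (1 : ℝ) else 0 := by
    rw [Finset.sum_comm]
    refine Finset.sum_congr rfl fun i _ => Finset.sum_congr rfl fun j _ => ?_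
    rw [agree_symm]
  unfold pairCount
  rw [sum_range_parity]
  simp_rw [sum_range_parity _ n, Finset.sum_add_distrib, hsymm, agree_even_even, agree_odd_odd]
  ring

lemma pairCount_of_three_le (n M : ℕ) (hM : 3 ≤ M) :
    pairCount n M = pairCount ((n + 1) / 2) (M / 2) + pairCount (n / 2) ((M + 1) / 2) := by
  rw [pairCount_parity]
  simp [not_agree_even_odd M _ _ hM]

lemma pairCount_two (n : ℕ) :
    pairCount n 2 = pairCount ((n + 1) / 2) 1 + pairCount (n / 2) 1
      + 2 * (ones ((n + 1) / 2) * ones (n / 2)) := by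
  classical
  rw [pairCount_parity]
  congr 2
  unfold ones
  rw [Finset.sum_mul_sum]
  refine Finset.sum_congr rfl fun i _ => Finset.sum_congr rfl fun j _ => ?_
  unfold oneInd
  by_cases hi : pd (i + 1) = 1 <;> by_cases hj : pd (j + 1) = 1 <;>
    simp [agree_two_even_odd, hi, hj]

lemma pairCount_one (n : ℕ) : pairCount n 1 = ones n ^ 2 + (n - ones n) ^ 2 := by
  classical
  have hn : (n : ℝ) - ones n = ∑ i ∈ Finset.range n, (1 - oneInd i) := by
    rw [Finset.sum_sub_distrib]
    simp [ones]
  rw [hn]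
  unfold pairCount ones
  rw [sq, sq, Finset.sum_mul_sum, Finset.sum_mul_sum, ← Finset.sum_add_distrib]
  refine Finset.sum_congr rfl fun i _ => ?_
  rw [← Finset.sum_add_distrib]
  refine Finset.sum_congr rfl fun j _ => ?_
  have := pd_le_one (i + 1)
  have := pd_le_one (j + 1)
  unfold oneInd Agree
  by_cases hi : pd (i + 1) = 1 <;> by_cases hj : pd (j + 1) = 1 <;>
    simp [hi, hj] <;> omega

/-! ### Density of the letter `1` -/

lemma ones_rec (n : ℕ) : ones n = ((n / 2 : ℕ) : ℝ) - ones (n / 2) := by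
  unfold ones
  rw [sum_range_parity]
  have h0 : ∀ i, oneInd (2 * i) = 0 := fun i => by simp [oneInd, pd_odd]
  have h1 : ∀ i, oneInd (2 * i + 1) = 1 - oneInd i := fun i => by
    have := pd_le_one (i + 1)
    unfold oneInd
    rw [show 2 * i + 1 + 1 = 2 * (i + 1) by ring, pd_two_mul _ (by omega)]
    by_cases hi : pd (i + 1) = 1
    · simp [hi]
    · simp [show pd (i + 1) = 0 by omega]
  simp [h0, h1]

/-- The discrepancy `3 * ones n - n` grows at most logarithmically, since its absolute
value changes by at most `1` when `n` is halved. -/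
lemma abs_ones_sub_le (n : ℕ) (hn : 1 ≤ n) : |3 * ones n - n| ≤ Nat.log 2 n + 1 := by
  induction n using Nat.strong_induction_on with
  | _ n ih =>
    rw [ones_rec]
    obtain rfl | hn2 : n = 1 ∨ 2 ≤ n := by omega
    · simp [ones]
    · have h := ih (n / 2) (by omega) (by omega)
      have hlog : Nat.log 2 n = Nat.log 2 (n / 2) + 1 := Nat.log_of_one_lt_of_le (by norm_num) hn2
      have hlo : (2 : ℝ) * ((n / 2 : ℕ) : ℝ) ≤ n := by
        exact_mod_cast (by omega : 2 * (n / 2) ≤ n)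
      have hhi : (n : ℝ) ≤ 2 * ((n / 2 : ℕ) : ℝ) + 1 := by
        exact_mod_cast (by omega : n ≤ 2 * (n / 2) + 1)
      rw [hlog]
      push_cast
      rw [abs_le] at *
      constructor <;> linarith

lemma tendsto_ones : Tendsto (fun n : ℕ => ones n / n) atTop (𝓝 (1 / 3)) := by
  have hlog : Tendsto (fun n : ℕ => Real.log n / n) atTop (𝓝 0) :=
    (Real.isLittleO_log_id_atTop.tendsto_div_nhds_zero).comp tendsto_natCast_atTop_atTop
  have hbound : Tendsto (fun n : ℕ => (Real.log n / n / Real.log 2 + 1 / (n : ℝ)) / 3)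
      atTop (𝓝 0) := by
    simpa using ((hlog.div_const (Real.log 2)).add tendsto_one_div_atTop_nhds_zero_nat).div_const 3
  rw [tendsto_iff_dist_tendsto_zero]
  refine squeeze_zero' (Eventually.of_forall fun n => dist_nonneg) ?_ hbound
  filter_upwards [eventually_ge_atTop 1] with n hn
  have hn0 : (0 : ℝ) < n := by exact_mod_cast hn
  have h1 := abs_ones_sub_le n hn
  have h2 : (Nat.log 2 n : ℝ) ≤ Real.log n / Real.log 2 := by
    simpa [Real.logb] using Real.natLog_le_logb n 2
  rw [Real.dist_eq, show ones n / n - 1 / 3 = (3 * ones n - n) / (3 * n) by field_simp,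
    abs_div, abs_of_pos (by positivity : (0 : ℝ) < 3 * n),
    show (Real.log n / n / Real.log 2 + 1 / (n : ℝ)) / 3
      = (Real.log n / Real.log 2 + 1) / (3 * n) by field_simp]
  gcongr
  linarith

/-! ### Limits of the correlation sums -/

lemma tendsto_half : Tendsto (fun n : ℕ => ((n / 2 : ℕ) : ℝ) / n) atTop (𝓝 (1 / 2)) := by
  rw [tendsto_iff_dist_tendsto_zero]
  refine squeeze_zero' (Eventually.of_forall fun n => dist_nonneg) ?_
    tendsto_one_div_atTop_nhds_zero_nat
  filter_upwards [eventually_ge_atTop 1] with n hn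
  have hn0 : (0 : ℝ) < n := by exact_mod_cast hn
  have hlo : (2 : ℝ) * ((n / 2 : ℕ) : ℝ) ≤ n := by
    exact_mod_cast (by omega : 2 * (n / 2) ≤ n)
  have hhi : (n : ℝ) ≤ 2 * ((n / 2 : ℕ) : ℝ) + 1 := by
    exact_mod_cast (by omega : n ≤ 2 * (n / 2) + 1)
  rw [Real.dist_eq, show ((n / 2 : ℕ) : ℝ) / n - 1 / 2 = (((n / 2 : ℕ) : ℝ) - n / 2) / n by
    field_simp, abs_div, abs_of_pos hn0]
  gcongr
  rw [abs_le]
  constructor <;> linarith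

lemma tendsto_half_up : Tendsto (fun n : ℕ => (((n + 1) / 2 : ℕ) : ℝ) / n) atTop (𝓝 (1 / 2)) := by
  have h : Tendsto (fun n : ℕ => 1 - ((n / 2 : ℕ) : ℝ) / n) atTop (𝓝 (1 / 2)) := by
    have := tendsto_half.const_sub 1
    norm_num at this ⊢
    exact this
  refine h.congr' ?_
  filter_upwards [eventually_ge_atTop 1] with n hn
  have hn0 : (0 : ℝ) < n := by exact_mod_cast hn
  have hsum : (n : ℝ) = (((n + 1) / 2 : ℕ) : ℝ) + ((n / 2 : ℕ) : ℝ) := by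
    exact_mod_cast (by omega : n = (n + 1) / 2 + n / 2)
  rw [eq_div_iff hn0.ne', sub_mul, div_mul_cancel₀ _ hn0.ne']
  linarith

lemma tendsto_div_two_atTop : Tendsto (fun n : ℕ => n / 2) atTop atTop :=
  Nat.tendsto_div_const_atTop (by norm_num)

lemma tendsto_div_two_up_atTop : Tendsto (fun n : ℕ => (n + 1) / 2) atTop atTop :=
  tendsto_div_two_atTop.comp (tendsto_add_atTop_nat 1)

/-- Rescaling of pair counts along a sequence `g n ~ n / 2`. -/
lemma tendsto_pairCount_comp {g : ℕ → ℕ} (hg : Tendsto g atTop atTop)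
    (hg2 : Tendsto (fun n : ℕ => (g n : ℝ) / n) atTop (𝓝 (1 / 2))) {M : ℕ} {x : ℝ}
    (hx : Tendsto (fun n => corrSum n M) atTop (𝓝 x)) :
    Tendsto (fun n : ℕ => pairCount (g n) M / (n : ℝ) ^ 2) atTop (𝓝 (x / 4)) := by
  have h := (hx.comp hg).mul (hg2.pow 2)
  rw [show x * (1 / 2) ^ 2 = x / 4 by ring] at h
  refine h.congr' ?_
  filter_upwards [hg.eventually_ge_atTop 1] with n hn
  have hn0 : (0 : ℝ) < g n := by exact_mod_cast hn
  simp only [Function.comp_apply, corrSum_eq]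
  field_simp

lemma tendsto_ones_comp {g : ℕ → ℕ} (hg : Tendsto g atTop atTop)
    (hg2 : Tendsto (fun n : ℕ => (g n : ℝ) / n) atTop (𝓝 (1 / 2))) :
    Tendsto (fun n : ℕ => ones (g n) / (n : ℝ)) atTop (𝓝 (1 / 6)) := by
  have h := (tendsto_ones.comp hg).mul hg2
  rw [show (1 / 3 : ℝ) * (1 / 2) = 1 / 6 by norm_num] at h
  refine h.congr' ?_
  filter_upwards [hg.eventually_ge_atTop 1] with n hn
  have hn0 : (0 : ℝ) < g n := by exact_mod_cast hn
  simp only [Function.comp_apply]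
  field_simp

lemma tendsto_corrSum_step {M : ℕ} (hM : 3 ≤ M) {x y : ℝ}
    (hx : Tendsto (fun n => corrSum n (M / 2)) atTop (𝓝 x))
    (hy : Tendsto (fun n => corrSum n ((M + 1) / 2)) atTop (𝓝 y)) :
    Tendsto (fun n => corrSum n M) atTop (𝓝 ((x + y) / 4)) := by
  have h := (tendsto_pairCount_comp tendsto_div_two_up_atTop tendsto_half_up hx).add
    (tendsto_pairCount_comp tendsto_div_two_atTop tendsto_half hy)
  rw [add_div]
  refine h.congr fun n => ?_
  rw [corrSum_eq, pairCount_of_three_le n M hM, add_div]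

lemma tendsto_corrSum_one : Tendsto (fun n => corrSum n 1) atTop (𝓝 (5 / 9)) := by
  have h := (tendsto_ones.pow 2).add ((tendsto_ones.const_sub 1).pow 2)
  norm_num at h
  refine h.congr' ?_
  filter_upwards [eventually_ge_atTop 1] with n hn
  have hn0 : (0 : ℝ) < n := by exact_mod_cast hn
  rw [corrSum_eq, pairCount_one]
  field_simp

lemma tendsto_corrSum_two : Tendsto (fun n => corrSum n 2) atTop (𝓝 (1 / 3)) := by
  have h := ((tendsto_pairCount_comp tendsto_div_two_up_atTop tendsto_half_up
    tendsto_corrSum_one).add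
    (tendsto_pairCount_comp tendsto_div_two_atTop tendsto_half tendsto_corrSum_one)).add
    (((tendsto_ones_comp tendsto_div_two_up_atTop tendsto_half_up).mul
      (tendsto_ones_comp tendsto_div_two_atTop tendsto_half)).const_mul 2)
  rw [show (5 / 9 / 4 + 5 / 9 / 4 + 2 * (1 / 6 * (1 / 6)) : ℝ) = 1 / 3 by norm_num] at h
  refine h.congr fun n => ?_
  rw [corrSum_eq, pairCount_two]
  ring

/-- The limit of the correlation sums at `2 ^ (k + 1) + q`. Both pieces contain the common
endpoint `q = 2 ^ k`, and the second one contains `q = 2 ^ (k + 1)`; the induction needs this, as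
the two halves of `q` may lie at an endpoint. -/
lemma tendsto_corrSum (k q : ℕ) :
    (q ≤ 2 ^ k → Tendsto (fun n => corrSum n (2 ^ (k + 1) + q)) atTop
      (𝓝 ((6 * 2 ^ (k + 1) - 4 * (q : ℝ)) / (3 * 2 ^ (k + 1)) ^ 2))) ∧
    (2 ^ k ≤ q → q ≤ 2 ^ (k + 1) → Tendsto (fun n => corrSum n (2 ^ (k + 1) + q)) atTop
      (𝓝 ((5 * 2 ^ (k + 1) - 2 * (q : ℝ)) / (3 * 2 ^ (k + 1)) ^ 2))) := by
  induction k generalizing q with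
  | zero =>
    have h3 := tendsto_corrSum_step (M := 3) le_rfl tendsto_corrSum_one tendsto_corrSum_two
    have h4 := tendsto_corrSum_step (M := 4) (by norm_num) tendsto_corrSum_two tendsto_corrSum_two
    constructor
    · intro hq
      obtain rfl | rfl : q = 0 ∨ q = 1 := by omega
      · convert tendsto_corrSum_two using 2 <;> norm_num
      · convert h3 using 2 <;> norm_num
    · intro hq hq2
      obtain rfl | rfl : q = 1 ∨ q = 2 := by omega
      · convert h3 using 2 <;> norm_num
      · convert h4 using 2 <;> norm_num
  | succ k ih =>
    have hpow : 2 ^ (k + 1) = 2 * 2 ^ k := pow_succ' 2 k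
    have hpow2 : 2 ^ (k + 2) = 2 * (2 * 2 ^ k) := by ring
    have hpos : 1 ≤ 2 ^ k := Nat.one_le_two_pow
    have hlo : (2 ^ (k + 2) + q) / 2 = 2 ^ (k + 1) + q / 2 := by omega
    have hhi : (2 ^ (k + 2) + q + 1) / 2 = 2 ^ (k + 1) + (q + 1) / 2 := by omega
    have hsum : (q : ℝ) = ((q / 2 : ℕ) : ℝ) + (((q + 1) / 2 : ℕ) : ℝ) := by
      exact_mod_cast (by omega : q = q / 2 + (q + 1) / 2)
    have step := fun x y => tendsto_corrSum_step (M := 2 ^ (k + 2) + q) (x := x) (y := y)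
      (by omega)
    rw [hlo, hhi] at step
    constructor
    · intro hq
      convert step _ _ ((ih (q / 2)).1 (by omega)) ((ih ((q + 1) / 2)).1 (by omega)) using 2
      rw [hsum, pow_succ (2 : ℝ) (k + 1)]
      field_simp
      ring
    · intro hq hq2
      have hq2' : q ≤ 2 ^ (k + 2) := hq2
      convert step _ _ ((ih (q / 2)).2 (by omega) (by omega))
        ((ih ((q + 1) / 2)).2 (by omega) (by omega)) using 2
      rw [hsum, pow_succ (2 : ℝ) (k + 1)]
      field_simp
      ring


theorem pd_recurrence_rate (l m : ℕ) (hl : 1 ≤ l) (hm : 1 ≤ m) :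
    (m = 1 → l = 1 →
      Tendsto (fun n => (l : ℝ) * corrSum n (m + l - 1) - ((l : ℝ) - 1) * corrSum n (m + l))
        atTop (𝓝 (5 / 9))) ∧
    (∀ k q, 1 ≤ k → q < 2 ^ k → m + l - 1 = 2 ^ k + q →
      (q < 2 ^ (k - 1) →
        Tendsto
          (fun n => (l : ℝ) * corrSum n (m + l - 1) - ((l : ℝ) - 1) * corrSum n (m + l))
          atTop
          (𝓝 ((3 * 2 ^ (k + 1) - 4 * (q : ℝ) + 4 * l - 4) / (3 * 2 ^ k : ℝ) ^ 2))) ∧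
      (2 ^ (k - 1) ≤ q →
        Tendsto
          (fun n => (l : ℝ) * corrSum n (m + l - 1) - ((l : ℝ) - 1) * corrSum n (m + l))
          atTop
          (𝓝 ((5 * 2 ^ k - 2 * (q : ℝ) + 2 * l - 2) / (3 * 2 ^ k : ℝ) ^ 2)))) := by
  constructor
  · rintro rfl rfl
    simpa using tendsto_corrSum_one
  · intro k q hk hq hM
    obtain ⟨k, rfl⟩ : ∃ t, k = t + 1 := ⟨k - 1, by omega⟩
    have hpow : 2 ^ (k + 1) = 2 * 2 ^ k := pow_succ' 2 k
    rw [show m + l = 2 ^ (k + 1) + (q + 1) by omega,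
      show 2 ^ (k + 1) + (q + 1) - 1 = 2 ^ (k + 1) + q by omega, Nat.add_sub_cancel]
    constructor
    · intro hq1
      convert (((tendsto_corrSum k q).1 (by omega)).const_mul (l : ℝ)).sub
        (((tendsto_corrSum k (q + 1)).1 (by omega)).const_mul ((l : ℝ) - 1)) using 2
      rw [pow_succ (2 : ℝ) (k + 1)]
      push_cast
      field_simp
      ring
    · intro hq1
      convert (((tendsto_corrSum k q).2 (by omega) (by omega)).const_mul (l : ℝ)).sub
        (((tendsto_corrSum k (q + 1)).2 (by omega) (by omega)).const_mul ((l : ℝ) - 1)) using 2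
      push_cast
      field_simp
      ring
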